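/- Let u_i be a parallel type and let (t_{i,a})_{a∈A} ∈ ℝ^A be standard prices (all nonnegative, with min_{a∈A} t_{i,a} = 0). Then: (i) for all a,b ∈ A with 0 ≤ t_{i,a} ≤ p_{i,a} and 0 ≤ t_{i,b} ≤ p_{i,b}, one has p_{i,a} − t_{i,a} ≥ p_{i,b} − t_{i,b} if and only if u_{i,a}(t_{i,a}) ≥ u_{i,b}(t_{i,b}); and (ii) argmax_{a∈A} u_{i,a}(t_{i,a}) = argmax_{a∈A} (p_{i,a} − t_{i,a}). -/

import Mathlib

/-!
Common framework: agents indexed by `I`, alternatives `A` (finite, nonempty).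
A type of an agent is a family `u : A → ℝ → ℝ`, where `u a z` is the utility
when alternative `a` is selected and the agent pays `z`.
-/

noncomputable section

namespace NQLSC

/-- A type (utility family) of an agent. -/
abbrev Util (A : Type*) := A → ℝ → ℝ

variable {A I : Type*}

/-- (S1): each `u a` is continuous and strictly decreasing in the payment. -/
def S1 (u : Util A) : Prop := ∀ a, Continuous (u a) ∧ StrictAnti (u a)

/-- `min_{a'∈A} u_{a'}(0)`, the value of the worst alternative at zero payment. -/
def minVal [Fintype A] [Nonempty A] (u : Util A) : ℝ :=
  Finset.univ.inf' Finset.univ_nonempty (fun a => u a 0)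

/-- (S2): as the payment tends to `+∞`, the utility of every alternative drops
(strictly) below `min_{a'} u_{a'}(0)`; for strictly decreasing utilities this is
equivalent to the utility being below that value at some payment. -/
def S2 [Fintype A] [Nonempty A] (u : Util A) : Prop :=
  ∀ a, ∃ z : ℝ, u a z < minVal u

/-- The willingness to pay `p_a = u_a⁻¹(min_{a'} u_{a'}(0))` (under (S1),(S2) this
`sInf` is the unique payment at which `u a` attains `minVal u`). -/
def wtp [Fintype A] [Nonempty A] (u : Util A) (a : A) : ℝ :=
  sInf {z : ℝ | u a z ≤ minVal u}

/-- A parallel type: (S1), (S2), and for all `a, b` with `v_a ≥ v_b` and all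
`z ∈ [0, p_b]`, `u_a (z + (p_a − p_b)) = u_b z`. -/
def IsParallel [Fintype A] [Nonempty A] (u : Util A) : Prop :=
  S1 u ∧ S2 u ∧ ∀ a b : A, u b 0 ≤ u a 0 → ∀ z : ℝ, 0 ≤ z → z ≤ wtp u b →
    u a (z + (wtp u a - wtp u b)) = u b z

/-- Unrestricted willingness to pay: every nonnegative vector with a zero entry is
the willingness-to-pay vector of some type in the domain. -/
def UnrestrictedWTP [Fintype A] [Nonempty A] (U : Set (Util A)) : Prop :=
  ∀ lam : A → ℝ, (∀ a, 0 ≤ lam a) → (∃ a, lam a = 0) →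
    ∃ u ∈ U, ∀ a, wtp u a = lam a

/-- Dominant-strategy incentive compatibility of a (deterministic) mechanism `(x,t)`
on the domain `𝒰 = ∏ i, U i`. -/
def DSIC [DecidableEq I] (U : I → Set (Util A)) (x : (I → Util A) → A)
    (t : (I → Util A) → I → ℝ) : Prop :=
  ∀ uh : I → Util A, (∀ j, uh j ∈ U j) → ∀ i, ∀ ui ∈ U i,
    ui (x uh) (t uh i) ≤
      ui (x (Function.update uh i ui)) (t (Function.update uh i ui) i)

/-- Individual rationality. -/
def IR [Fintype A] [Nonempty A] [DecidableEq I] (U : I → Set (Util A))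
    (x : (I → Util A) → A) (t : (I → Util A) → I → ℝ) : Prop :=
  ∀ uh : I → Util A, (∀ j, uh j ∈ U j) → ∀ i, ∀ ui ∈ U i,
    minVal ui ≤ ui (x (Function.update uh i ui)) (t (Function.update uh i ui) i)

/-- No subsidy: the mechanism never makes positive transfers to an agent. -/
def NoSubsidy (U : I → Set (Util A)) (t : (I → Util A) → I → ℝ) : Prop :=
  ∀ u : I → Util A, (∀ j, u j ∈ U j) → ∀ i, 0 ≤ t u i

/-- Ontoness of the choice rule on the given domain. -/
def OntoMech (U : I → Set (Util A)) (x : (I → Util A) → A) : Prop :=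
  ∀ a, ∃ u : I → Util A, (∀ j, u j ∈ U j) ∧ x u = a

theorem minVal_le [Fintype A] [Nonempty A] (u : Util A) (a : A) : minVal u ≤ u a 0 :=
  Finset.inf'_le _ (Finset.mem_univ a)

/-- Under (S1) and (S2), the utility at the willingness to pay is the worst value. -/
theorem apply_wtp [Fintype A] [Nonempty A] {u : Util A} (h1 : S1 u) (h2 : S2 u) (a : A) :
    u a (wtp u a) = minVal u := by
  obtain ⟨z, hz⟩ := h2 a
  obtain ⟨p, hp⟩ : minVal u ∈ Set.range (u a) :=
    mem_range_of_exists_le_of_exists_ge (h1 a).1 ⟨z, hz.le⟩ ⟨0, minVal_le u a⟩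
  have hset : {z : ℝ | u a z ≤ minVal u} = Set.Ici p := by
    ext y
    rw [Set.mem_ofPred_eq, ← hp, (h1 a).2.le_iff_ge, Set.mem_Ici]
  rw [wtp, hset, csInf_Ici, hp]

theorem le_wtp_iff [Fintype A] [Nonempty A] {u : Util A} (h1 : S1 u) (h2 : S2 u) (a : A) (z : ℝ) :
    z ≤ wtp u a ↔ minVal u ≤ u a z := by
  rw [← apply_wtp h1 h2 a, (h1 a).2.le_iff_ge]

theorem wtp_nonneg [Fintype A] [Nonempty A] {u : Util A} (h1 : S1 u) (h2 : S2 u) (a : A) :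
    0 ≤ wtp u a :=
  (le_wtp_iff h1 h2 a 0).2 (minVal_le u a)

/-- For a parallel type, at payments between zero and the willingness to pay, utilities are
ordered as the differences between willingness to pay and payment. -/
theorem IsParallel.wtp_sub_le_iff [Fintype A] [Nonempty A] {u : Util A} (hu : IsParallel u)
    {a b : A} {x y : ℝ} (hx0 : 0 ≤ x) (hy0 : 0 ≤ y) (hx : x ≤ wtp u a) (hy : y ≤ wtp u b) :
    wtp u b - y ≤ wtp u a - x ↔ u b y ≤ u a x := by
  obtain ⟨h1, -, hpar⟩ := hu
  rcases le_total (u b 0) (u a 0) with h | h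
  · rw [← hpar a b h y hy0 hy, (h1 a).2.le_iff_ge]
    constructor <;> intro <;> linarith
  · rw [← hpar b a h x hx0 hx, (h1 b).2.le_iff_ge]
    constructor <;> intro <;> linarith

/-- For a parallel type and standard prices: (i) among alternatives
priced within the willingness to pay, the comparison of `p_a − t_a` agrees with the
comparison of utilities at the given prices; (ii) the argmax of utility at the prices
coincides with the argmax of `p_a − t_a`. -/
theorem parallel_agent_maximization
    [Fintype A] [Nonempty A]
    (u : Util A) (hu : IsParallel u)
    (tt : A → ℝ) (h0 : ∀ a, 0 ≤ tt a) (hz : ∃ a, tt a = 0) :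
    (∀ a b : A, tt a ≤ wtp u a → tt b ≤ wtp u b →
      (wtp u b - tt b ≤ wtp u a - tt a ↔ u b (tt b) ≤ u a (tt a))) ∧
    (∀ a : A, (∀ b : A, u b (tt b) ≤ u a (tt a)) ↔
      (∀ b : A, wtp u b - tt b ≤ wtp u a - tt a)) := by
  have hi : ∀ a b : A, tt a ≤ wtp u a → tt b ≤ wtp u b →
      (wtp u b - tt b ≤ wtp u a - tt a ↔ u b (tt b) ≤ u a (tt a)) :=
    fun a b => hu.wtp_sub_le_iff (h0 a) (h0 b)
  refine ⟨hi, fun a => ?_⟩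
  obtain ⟨h1, h2, -⟩ := hu
  obtain ⟨c, hc⟩ := hz
  constructor
  · intro h b
    have hca := h c
    rw [hc] at hca
    have ha : tt a ≤ wtp u a := (le_wtp_iff h1 h2 a _).2 ((minVal_le u c).trans hca)
    rcases le_or_gt (tt b) (wtp u b) with hb | hb
    · exact (hi a b ha hb).2 (h b)
    · linarith
  · intro h b
    have hca := h c
    rw [hc] at hca
    have hc0 := wtp_nonneg h1 h2 c
    have ha : tt a ≤ wtp u a := by linarith
    rcases le_or_gt (tt b) (wtp u b) with hb | hb
    · exact (hi a b ha hb).1 (h b)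
    · have hlt : u b (tt b) < minVal u := by
        rwa [← not_le, ← le_wtp_iff h1 h2, not_le]
      exact hlt.le.trans ((le_wtp_iff h1 h2 a _).1 ha)

end NQLSC
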